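/- Let R > 0, C₀ > 0, C₁ > 0, a > 0 and N > 0. Let g : [R, ∞) → ℝ be a nonnegative twice continuously differentiable function such that g(t) = O(t^N) as t → ∞ and −g″(t) ≤ −C₀·g(t) + C₁·e^{−a·t} for all t ≥ R. Then there exist ε > 0 and C > 0 such that g(t) ≤ C·e^{−ε·t} for all t ≥ R. -/

import Mathlib

theorem aux_not_localMax (u u' : ℝ → ℝ) (x c : ℝ) (h1 : ∀ᶠ y in nhds x, HasDerivAt u (u' y) y)
    (h2 : HasDerivAt u' c x) (hc : 0 < c) (hm : IsLocalMax u x) : False := by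
  have e : deriv u =ᶠ[nhds x] u' := h1.mono fun y hy => hy.deriv
  have hd : deriv (deriv u) x = c := by rw [e.deriv_eq]; exact h2.deriv
  have hmin : IsLocalMin u x :=
    isLocalMin_of_deriv_deriv_pos (by rw [hd]; exact hc) hm.deriv_eq_zero
      h1.self_of_nhds.continuousAt
  have ec : u =ᶠ[nhds x] fun _ => u x := by
    filter_upwards [hm, hmin] with y a b using le_antisymm a b
  have e0 : deriv (deriv u) x = 0 := by
    rw [ec.deriv.deriv_eq]; simp
  linarith

theorem aux_g (R : ℝ) (g : ℝ → ℝ) (hg2 : ContDiffOn ℝ 2 g (Set.Ici R)) (x : ℝ) (hx : R < x) :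
    (∀ᶠ y in nhds x, HasDerivAt g (deriv g y) y) ∧
    HasDerivAt (deriv g) (iteratedDerivWithin 2 g (Set.Ici R) x) x := by
  have h3 : ContDiffOn ℝ (1+1) g (Set.Ioi R) := by
    rw [one_add_one_eq_two]; exact hg2.mono Set.Ioi_subset_Ici_self
  rw [contDiffOn_succ_iff_deriv_of_isOpen isOpen_Ioi] at h3
  obtain ⟨hd, -, hd2⟩ := h3
  refine ⟨?_, ?_⟩
  · filter_upwards [Ioi_mem_nhds hx] with y hy
    exact ((hd y hy).differentiableAt (Ioi_mem_nhds hy)).hasDerivAt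
  · have e : derivWithin g (Set.Ici R) =ᶠ[nhds x] deriv g := by
      filter_upwards [Ioi_mem_nhds hx] with y hy
      exact derivWithin_of_mem_nhds (Ici_mem_nhds hy)
    have : iteratedDerivWithin 2 g (Set.Ici R) x = deriv (deriv g) x := by
      have e1 : iteratedDerivWithin 1 g (Set.Ici R) =ᶠ[nhds x] deriv g := by
        filter_upwards [e] with y hy
        rw [iteratedDerivWithin_one, hy]
      rw [iteratedDerivWithin_succ,
        derivWithin_of_mem_nhds (Ici_mem_nhds hx), e1.deriv_eq]
    rw [this]
    exact (((hd2.differentiableOn one_ne_zero) x hx).differentiableAt (Ioi_mem_nhds hx)).hasDerivAt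

theorem aux_exp (A k : ℝ) (y : ℝ) :
    HasDerivAt (fun t => A * Real.exp (k * t)) (A * k * Real.exp (k * y)) y := by
  have := (((hasDerivAt_id y).const_mul k).exp).const_mul A
  refine HasDerivAt.congr_deriv this ?_
  simp only [id]
  ring

/-- Ahlfors-type lemma: a nonnegative `C²` function on `[R, ∞)` of polynomial
growth satisfying `−g″ ≤ −C₀·g + C₁·e^{−a·t}` decays exponentially. -/
theorem exp_decay_of_differential_inequality
    (R C0 C1 a N : ℝ) (hR : 0 < R) (hC0 : 0 < C0) (hC1 : 0 < C1)
    (ha : 0 < a) (hN : 0 < N) (g : ℝ → ℝ)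
    (hg0 : ∀ t ∈ Set.Ici R, 0 ≤ g t)
    (hg2 : ContDiffOn ℝ 2 g (Set.Ici R))
    (hgrow : ∃ C' > 0, ∃ T ≥ R, ∀ t ≥ T, g t ≤ C' * t ^ N)
    (hineq : ∀ t ∈ Set.Ici R,
      -(iteratedDerivWithin 2 g (Set.Ici R) t) ≤ -C0 * g t + C1 * Real.exp (-a * t)) :
    ∃ ε > 0, ∃ C > 0, ∀ t ∈ Set.Ici R, g t ≤ C * Real.exp (-ε * t) := by
  obtain ⟨C', hC', T, hT, hgr⟩ := hgrow
  obtain ⟨ε, hε, hεa, hε2⟩ : ∃ ε > 0, ε ≤ a ∧ ε ^ 2 ≤ C0 / 2 := by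
    refine ⟨min a (√(C0/2)), by positivity, min_le_left _ _, ?_⟩
    calc (min a (√(C0/2))) ^ 2 ≤ (√(C0/2)) ^ 2 := by
          gcongr; exact min_le_right _ _
      _ = C0 / 2 := Real.sq_sqrt (by positivity)
  have hgR := hg0 R Set.self_mem_Ici
  set C := 2 * C1 / C0 + g R * Real.exp (ε * R) with hCdef
  have hCpos : 0 < C := by positivity
  have hC1' : C1 ≤ C * (C0 / 2) := by
    have : 0 ≤ g R * Real.exp (ε * R) * (C0 / 2) := by positivity
    have h2 : 2 * C1 / C0 * (C0 / 2) = C1 := by field_simp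
    rw [hCdef, add_mul]; linarith
  have hCR : g R ≤ C * Real.exp (-ε * R) := by
    have h1 : Real.exp (ε * R) * Real.exp (-ε * R) = 1 := by rw [← Real.exp_add]; simp
    have : 0 ≤ 2 * C1 / C0 * Real.exp (-ε * R) := by positivity
    rw [hCdef, add_mul, mul_assoc (g R), h1]; linarith
  refine ⟨ε, hε, C, hCpos, fun t ht => ?_⟩
  have key : ∀ δ > 0, g t ≤ C * Real.exp (-ε * t) + δ * Real.exp (ε * t) := by
    intro δ hδ
    by_contra! hcon
    set u : ℝ → ℝ := fun s => g s - C * Real.exp (-ε * s) - δ * Real.exp (ε * s) with hu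
    have hut : 0 < u t := by simp only [hu]; linarith
    have hlo := (isLittleO_rpow_exp_pos_mul_atTop N hε).bound (show 0 < δ / C' by positivity)
    obtain ⟨S, hS1, hS2, hS3⟩ := (hlo.and ((Filter.eventually_ge_atTop T).and
      (Filter.eventually_gt_atTop t))).exists
    have ht' : R ≤ t := ht
    have hS : u S < 0 := by
      have h1 := hgr S hS2
      have h2 : S ^ N ≤ δ / C' * Real.exp (ε * S) := by
        have := (Real.le_norm_self _).trans hS1
        simpa using this
      have h3 : C' * S ^ N ≤ δ * Real.exp (ε * S) := by
        calc C' * S ^ N ≤ C' * (δ / C' * Real.exp (ε * S)) := by gcongr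
          _ = _ := by field_simp
      have : 0 < C * Real.exp (-ε * S) := by positivity
      simp only [hu]; linarith
    have hRu : u R < 0 := by
      have : 0 < δ * Real.exp (ε * R) := by positivity
      simp only [hu]; linarith
    have hcont : ContinuousOn u (Set.Icc R S) := by
      have := hg2.continuousOn.mono (fun y (hy : y ∈ Set.Icc R S) => hy.1)
      simp only [hu]
      fun_prop
    obtain ⟨x, hx, hmax⟩ := isCompact_Icc.exists_isMaxOn ⟨t, ht', hS3.le⟩ hcont
    have hux : 0 < u x := hut.trans_le (hmax ⟨ht', hS3.le⟩)
    have hxR : R < x := lt_of_le_of_ne hx.1 (by rintro rfl; linarith)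
    have hxS : x < S := lt_of_le_of_ne hx.2 (by rintro rfl; linarith)
    obtain ⟨d1, d2⟩ := aux_g R g hg2 x hxR
    refine aux_not_localMax u
      (fun s => deriv g s - C * (-ε) * Real.exp (-ε * s) - δ * ε * Real.exp (ε * s)) x _
      (d1.mono fun y hy => (hy.sub (aux_exp C (-ε) y)).sub (aux_exp δ ε y))
      ((d2.sub (aux_exp (C * -ε) (-ε) x)).sub (aux_exp (δ * ε) ε x)) ?_
      (hmax.isLocalMax (Icc_mem_nhds hxR hxS))
    have hi := hineq x hx.1
    have he : Real.exp (-a * x) ≤ Real.exp (-ε * x) := by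
      apply Real.exp_le_exp.2
      have : 0 < x := hR.trans hxR
      nlinarith
    simp only [hu] at hux
    have p1 := Real.exp_pos (-ε * x)
    have p2 := Real.exp_pos (ε * x)
    generalize Real.exp (-ε * x) = E at *
    generalize Real.exp (ε * x) = F at *
    have q1 : C1 * Real.exp (-a * x) ≤ C * (C0 / 2) * E := by
      calc _ ≤ C1 * E := by gcongr
        _ ≤ _ := by gcongr
    have q2 : C * E * ε ^ 2 ≤ C * E * (C0 / 2) := by gcongr
    have q3 : δ * F * ε ^ 2 ≤ δ * F * (C0 / 2) := by gcongr
    have q4 : 0 < δ * F * C0 := by positivity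
    have q5 := mul_pos hC0 hux
    nlinarith
  refine le_of_forall_pos_le_add fun η hη => ?_
  have := key (η / Real.exp (ε * t)) (by positivity)
  rwa [div_mul_cancel₀ _ (Real.exp_pos _).ne'] at this
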